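/- The Möbius band admits no cancellative continuous binary operation; that is, there is no continuous map · : 𝕄 × 𝕄 → 𝕄 on the Möbius band 𝕄 such that for all x, y, z ∈ 𝕄, z·x = z·y implies x = y and x·z = y·z implies x = y. -/

import Mathlib

/-!
The proof is an orientation argument. Suppose the operation exists and let a point `z` run once
around the core circle while `x` stays fixed. Left multiplication by `z` is injective, so it has a
nonzero local degree at `x`, relative to an orientation at `x` and one at the product, the latter
carried continuously along the path of products. As left multiplication by `z` is the same at the
start and at the end, that path of products preserves orientation (`not_odd_left`). On the other
hand right multiplication by `x` is injective, and following its local degree while `z` itself goes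
around the orientation-reversing core circle shows that the same path of products reverses
orientation (`not_even_right`, with the two variables swapped).

The local degree is made elementary as follows. The operation is lifted to a map `F` into the strip
`|im| ≤ 1/2`, the universal covering (`exists_lift_param`). By injectivity,
`F z (x + exp (iθ) / 4) - F z (x - exp (iθ) / 4)` never vanishes, and it is odd under
`θ ↦ θ + π`. Hence a continuous logarithm of it increases by a constant `c` with `exp c = -1` over
each half turn (`exists_circ_log`), and `2 * c = 2πi * d` with `d` the odd local degree.
The deck group of the strip is generated by `x ↦ 1 + conj x`, so an orientation reversal
of the values conjugates `c`, and one of the variable replaces `c` by `-c`; both are impossible.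
-/

/-- The gluing relation on the square `[0,1] × [0,1]` identifying `(0, y)` with
`(1, 1 - y)`. -/
def mobiusRel (a b : unitInterval × unitInterval) : Prop :=
  a = b ∨ (a.1 = 0 ∧ b.1 = 1 ∧ (a.2 : ℝ) = 1 - (b.2 : ℝ)) ∨
    (a.1 = 1 ∧ b.1 = 0 ∧ (a.2 : ℝ) = 1 - (b.2 : ℝ))

/-- The Möbius band: the quotient of the square `[0,1] × [0,1]` by the relation
identifying `(0, y)` with `(1, 1 - y)`, with the quotient topology. -/
def MobiusBand : Type := Quot mobiusRel

instance : TopologicalSpace MobiusBand :=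
  inferInstanceAs (TopologicalSpace (Quot mobiusRel))

open Complex ComplexConjugate

/-! ### Continuous logarithms -/

lemma exists_log_lift {E : Type*} [TopologicalSpace E] [SimplyConnectedSpace E]
    [LocallyPathConnectedSpace E] (g : E → ℂ) (hg : Continuous g) (h0 : ∀ e, g e ≠ 0) :
    ∃ L : E → ℂ, Continuous L ∧ ∀ e, exp (L e) = g e := by
  obtain ⟨a⟩ : Nonempty E := inferInstance
  obtain ⟨F, ⟨-, hF⟩, -⟩ := isCoveringMapOn_exp.existsUnique_continuousMap_lifts ⟨g, hg⟩
    (a₀ := a) (e₀ := log (g a)) (by simpa using exp_log (h0 a)) (by simpa using h0)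
  exact ⟨F, F.continuous, fun e => congrFun hF e⟩

lemma eq_const_of_exp_eq {E : Type*} [TopologicalSpace E] [PreconnectedSpace E] [Nonempty E]
    (L : E → ℂ) (hL : Continuous L) (k : ℂ) (h : ∀ e, exp (L e) = k) :
    ∃ c, exp c = k ∧ ∀ e, L e = c := by
  obtain ⟨a⟩ : Nonempty E := inferInstance
  refine ⟨L a, h a, fun e => isCoveringMap_exp.const_of_comp hL (fun b b' => ?_) e a⟩
  simp [h]

/-! ### Turning numbers of locally injective maps of the strip -/

/-- Every `F z` is injective on pieces of the strip `|im| ≤ 1/2` of real width less than `1`. -/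
def IsLocInj (F : ℂ → ℂ → ℂ) : Prop :=
  ∀ z x y : ℂ, |x.re - y.re| < 1 → |x.im| ≤ 1 / 2 → |y.im| ≤ 1 / 2 → F z x = F z y → x = y

/-- The difference of the values of `F z` at the two ends `x ± exp (iθ) / 4` of a diameter of the
circle of radius `1/4` about the real point `x`. The argument `w` is `(z, x, θ)`, with `z` real. -/
noncomputable def circ (F : ℂ → ℂ → ℂ) (w : ℝ × ℝ × ℝ) : ℂ :=
  F w.1 (w.2.1 + exp (w.2.2 * I) / 4) - F w.1 (w.2.1 - exp (w.2.2 * I) / 4)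

/-- `circ F` never vanishes and changes sign under `θ ↦ θ + π`, so a continuous logarithm of it
increases by a constant odd multiple `c` of `iπ` over each half turn: the local degree of `F z` at
`x` is odd and independent of `(z, x)`. -/
lemma exists_circ_log (F : ℂ → ℂ → ℂ) (hF : Continuous (fun p : ℂ × ℂ => F p.1 p.2))
    (hinj : IsLocInj F) :
    ∃ (L : ℝ × ℝ × ℝ → ℂ) (c : ℂ), Continuous L ∧ (∀ w, exp (L w) = circ F w) ∧ exp c = -1 ∧
      ∀ z x θ, L (z, x, θ + Real.pi) = L (z, x, θ) + c := by
  have hcont : Continuous (circ F) := by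
    unfold circ
    refine Continuous.sub ?_ ?_
    · exact hF.comp (f := fun w : ℝ × ℝ × ℝ =>
        ((w.1 : ℂ), (w.2.1 + exp (w.2.2 * I) / 4 : ℂ))) (by fun_prop)
    · exact hF.comp (f := fun w : ℝ × ℝ × ℝ =>
        ((w.1 : ℂ), (w.2.1 - exp (w.2.2 * I) / 4 : ℂ))) (by fun_prop)
  have h0 : ∀ w, circ F w ≠ 0 := by
    rintro ⟨z, x, θ⟩ h
    have h1 := hinj _ _ _ ?_ ?_ ?_ (sub_eq_zero.mp h)
    · have : exp (θ * I) = 0 := by linear_combination 2 * h1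
      exact exp_ne_zero _ this
    all_goals
      have hc := abs_le.mp (Real.abs_cos_le_one θ)
      have hs := abs_le.mp (Real.abs_sin_le_one θ)
      have e1 : (exp (θ * I) / 4).re = Real.cos θ / 4 := by
        rw [show (4 : ℂ) = ((4 : ℝ) : ℂ) by norm_num, div_ofReal_re, exp_ofReal_mul_I_re]
      have e2 : (exp (θ * I) / 4).im = Real.sin θ / 4 := by
        rw [show (4 : ℂ) = ((4 : ℝ) : ℂ) by norm_num, div_ofReal_im, exp_ofReal_mul_I_im]
      simp only [add_re, sub_re, add_im, sub_im, e1, e2, ofReal_re, ofReal_im]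
      first | rw [abs_lt] | rw [abs_le]
      constructor <;> linarith
  obtain ⟨L, hL, hLg⟩ := exists_log_lift _ hcont h0
  obtain ⟨c, hc, hLc⟩ := eq_const_of_exp_eq
    (fun w : ℝ × ℝ × ℝ => L (w.1, w.2.1, w.2.2 + Real.pi) - L w) (by fun_prop) (-1) (by
      rintro ⟨z, x, θ⟩
      rw [exp_sub, hLg, hLg, div_eq_iff (h0 _)]
      simp only [circ]
      push_cast
      rw [add_mul, exp_add, exp_pi_mul_I]
      ring_nf)
  exact ⟨L, c, hL, hLg, hc, fun z x θ => by linear_combination hLc (z, x, θ)⟩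

/-- Moving `z` once around the core circle cannot reverse the orientation of the values: that would
make the half-turn increment `c` equal to its own conjugate, hence real, against `exp c = -1`. -/
lemma not_odd_left (F : ℂ → ℂ → ℂ) (hF : Continuous (fun p : ℂ × ℂ => F p.1 p.2))
    (hinj : IsLocInj F) (n : ℂ) (h : ∀ z x, F (1 + conj z) x = n + conj (F z x)) : False := by
  obtain ⟨L, c, hL, hLg, hc, hLc⟩ := exists_circ_log F hF hinj
  obtain ⟨d, -, hd⟩ := eq_const_of_exp_eq
    (fun w : ℝ × ℝ × ℝ => L (1 + w.1, w.2) - conj (L w)) (by fun_prop) 1 (by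
      rintro ⟨z, x, θ⟩
      rw [exp_sub, exp_conj, div_eq_one_iff_eq (by simp [← exp_conj]), hLg, hLg]
      have h' := h z
      simp only [conj_ofReal] at h'
      simp [circ, h'])
  have h1 := hd (0, 0, 0)
  have h2 := hd (0, 0, 0 + Real.pi)
  simp only [hLc, map_add] at h1 h2
  have h3 : conj c = c := by linear_combination h1 - h2
  obtain ⟨r, rfl⟩ := conj_eq_iff_real.mp h3
  have h4 : Real.exp r = -1 := by exact_mod_cast hc
  linarith [Real.exp_pos r]

/-- Moving `x` once around the core circle cannot preserve the orientation of the values: it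
reverses the small circle about `x`, so the half-turn increment `c` would equal `-c`, against
`exp c = -1`. -/
lemma not_even_right (F : ℂ → ℂ → ℂ) (hF : Continuous (fun p : ℂ × ℂ => F p.1 p.2))
    (hinj : IsLocInj F) (n : ℂ) (h : ∀ z x, F z (1 + conj x) = n + F z x) : False := by
  obtain ⟨L, c, hL, hLg, hc, hLc⟩ := exists_circ_log F hF hinj
  obtain ⟨d, -, hd⟩ := eq_const_of_exp_eq
    (fun w : ℝ × ℝ × ℝ => L (w.1, 1 + w.2.1, w.2.2) - L (w.1, w.2.1, -w.2.2))
    (by fun_prop) 1 (by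
      rintro ⟨z, x, θ⟩
      rw [exp_sub, div_eq_one_iff_eq (exp_ne_zero _), hLg, hLg]
      have h1 := h z (x + exp (-θ * I) / 4)
      have h2 := h z (x - exp (-θ * I) / 4)
      have h3 : conj (exp (-θ * I)) = exp (θ * I) := by
        rw [← exp_conj]; simp
      simp only [map_add, map_sub, map_div₀, h3, conj_ofReal, map_ofNat] at h1 h2
      simp only [circ]
      push_cast
      rw [add_assoc, h1, add_sub_assoc 1, h2]
      ring)
  have h1 := hd (0, 0, 0)
  have h2 := hd (0, 0, 0 + Real.pi)
  have h3 := hLc 0 0 (-Real.pi)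
  simp only [hLc] at h2
  simp only [neg_zero, zero_add, neg_add_cancel, add_zero] at h1 h2 h3
  have h4 : c = 0 := by linear_combination (h2 - h1 - h3) / 2
  rw [h4, exp_zero] at hc
  norm_num at hc

/-! ### The Möbius band in `ℂ × ℂ` and its universal covering by the strip -/

/-- The projection of `ℝ` onto `[-1/2, 1/2]`. -/
noncomputable def clampHalf (t : ℝ) : ℝ := max (-(1 / 2)) (min t (1 / 2))

lemma clampHalf_neg (t : ℝ) : clampHalf (-t) = -clampHalf t := by
  unfold clampHalf
  rcases le_total t (1/2) with h | h <;> rcases le_total (-t) (1/2) with h' | h' <;>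
    simp only [max_def, min_def] <;> split_ifs <;> linarith

lemma abs_clampHalf (t : ℝ) : |clampHalf t| ≤ 1 / 2 := by
  unfold clampHalf
  rw [abs_le]
  exact ⟨le_max_left _ _, max_le (by norm_num) (min_le_right _ _)⟩

lemma clampHalf_of_abs {t : ℝ} (h : |t| ≤ 1 / 2) : clampHalf t = t := by
  rw [abs_le] at h
  rw [clampHalf, min_eq_left h.2, max_eq_right h.1]

/-- The standard model of the Möbius band in `ℂ × ℂ`, with position `s` along the core circle and
height `t` in the fibre, so that `(s + 1, -t)` and `(s, t)` give the same point. -/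
noncomputable def model (s t : ℝ) : ℂ × ℂ := (exp (2 * Real.pi * s * I), t * exp (Real.pi * s * I))

lemma model_eq_iff {s t s' t' : ℝ} : model s t = model s' t' ↔
    ∃ n : ℤ, s = s' + n ∧ (t : ℂ) * exp (Real.pi * n * I) = t' := by
  have hpi : (Real.pi : ℂ) ≠ 0 := by exact_mod_cast Real.pi_ne_zero
  have hs (n : ℤ) : s = s' + n →
      exp (Real.pi * s * I) = exp (Real.pi * s' * I) * exp (Real.pi * n * I) := by
    rintro rfl
    rw [← exp_add]; push_cast; ring_nf
  simp only [model, Prod.mk.injEq, exp_eq_exp_iff_exists_int]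
  constructor
  · rintro ⟨⟨n, hn⟩, h2⟩
    have h1 : s = s' + n := by
      have : (s : ℂ) = s' + n := by
        have h3 : (2 * Real.pi * I) * (s - s' - n) = 0 := by linear_combination hn
        have := (mul_eq_zero.mp h3).resolve_left (by simp [hpi])
        linear_combination this
      exact_mod_cast this
    refine ⟨n, h1, ?_⟩
    rw [hs n h1] at h2
    have := exp_ne_zero (Real.pi * s' * I)
    apply mul_right_cancel₀ this
    linear_combination h2
  · rintro ⟨n, h1, h2⟩
    refine ⟨⟨n, by rw [h1]; push_cast; ring⟩, ?_⟩
    rw [hs n h1, ← h2]; ring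

lemma exp_pi_int (n : ℤ) :
    (Even n ∧ exp (Real.pi * n * I) = 1) ∨ (Odd n ∧ exp (Real.pi * n * I) = -1) := by
  have : exp (Real.pi * n * I) = (-1) ^ n := by
    rw [← exp_pi_mul_I, ← exp_int_mul]; ring_nf
  rw [this]
  rcases Int.even_or_odd n with h | h
  · exact Or.inl ⟨h, h.neg_one_zpow⟩
  · exact Or.inr ⟨h, h.neg_one_zpow⟩

/-- The embedding of the Möbius band into `ℂ × ℂ` given by `model`, with heights measured from the
middle line of the square. -/
noncomputable def emb : MobiusBand → ℂ × ℂ :=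
  Quot.lift (fun p : unitInterval × unitInterval => model p.1 (p.2 - 1 / 2)) (by
    rintro ⟨⟨s, hs⟩, ⟨t, ht⟩⟩ ⟨⟨s', hs'⟩, ⟨t', ht'⟩⟩ (h | ⟨h1, h2, h3⟩ | ⟨h1, h2, h3⟩)
    · rw [h]
    · simp only [Subtype.ext_iff, Set.Icc.coe_zero, Set.Icc.coe_one] at h1 h2 h3
      subst h1 h2 h3
      exact model_eq_iff.mpr ⟨-1, by norm_num, by simp [exp_neg, exp_pi_mul_I]; ring⟩
    · simp only [Subtype.ext_iff, Set.Icc.coe_zero, Set.Icc.coe_one] at h1 h2 h3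
      subst h1 h2 h3
      exact model_eq_iff.mpr ⟨1, by norm_num, by simp [exp_pi_mul_I]; ring⟩)

lemma emb_injective : Function.Injective emb := by
  rintro ⟨⟨s, hs⟩, ⟨t, ht⟩⟩ ⟨⟨s', hs'⟩, ⟨t', ht'⟩⟩ h
  obtain ⟨n, h1, h2⟩ := model_eq_iff.mp h
  simp only at h1 h2
  have hn1 : (-1 : ℝ) ≤ n := by linarith [hs.1, hs'.2]
  have hn2 : (n : ℝ) ≤ 1 := by linarith [hs.2, hs'.1]
  have hn1' : -1 ≤ n := by exact_mod_cast hn1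
  have hn2' : n ≤ 1 := by exact_mod_cast hn2
  apply Quot.sound
  rcases exp_pi_int n with ⟨hp, he⟩ | ⟨hp, he⟩ <;> rw [he] at h2
  · obtain rfl : n = 0 := by grind
    have h3 : t - 1 / 2 = t' - 1 / 2 := by
      have : ((t - 1 / 2 : ℝ) : ℂ) = ((t' - 1 / 2 : ℝ) : ℂ) := by simpa using h2
      exact_mod_cast this
    left
    ext
    · simpa using h1
    · simpa using h3
  · have h3 : (t - 1 / 2) * (-1) = t' - 1 / 2 := by exact_mod_cast h2
    have h4 : t = 1 - t' := by linarith
    right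
    obtain rfl | rfl : n = -1 ∨ n = 1 := by grind
    · push_cast at h1
      exact Or.inl ⟨Subtype.ext (show s = 0 by linarith [hs.1, hs'.2]),
        Subtype.ext (show s' = 1 by linarith [hs.1, hs'.2]), h4⟩
    · push_cast at h1
      exact Or.inr ⟨Subtype.ext (show s = 1 by linarith [hs.2, hs'.1]),
        Subtype.ext (show s' = 0 by linarith [hs.2, hs'.1]), h4⟩

lemma isClosedEmbedding_emb : Topology.IsClosedEmbedding emb := by
  have : CompactSpace MobiusBand := inferInstanceAs (CompactSpace (Quot mobiusRel))
  refine Continuous.isClosedEmbedding ?_ emb_injective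
  refine continuous_quot_lift _ ?_
  unfold model
  fun_prop

/-- Translating `s` into `[0, 1)` reaches every point of the model from the square. -/
lemma exists_emb_eq (s t : ℝ) (ht : |t| ≤ 1 / 2) : ∃ m, emb m = model s t := by
  have hf : (s : ℝ) = Int.fract s + ⌊s⌋ := (Int.fract_add_floor s).symm
  have ht' := abs_le.mp ht
  have hI : Int.fract s ∈ unitInterval := ⟨Int.fract_nonneg s, (Int.fract_lt_one s).le⟩
  rcases exp_pi_int ⌊s⌋ with ⟨-, he⟩ | ⟨-, he⟩
  · refine ⟨Quot.mk _ (⟨Int.fract s, hI⟩, ⟨t + 1 / 2, by constructor <;> linarith⟩), ?_⟩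
    refine (model_eq_iff.mpr ⟨⌊s⌋, hf, ?_⟩).symm
    simp only [he]; simp
  · refine ⟨Quot.mk _ (⟨Int.fract s, hI⟩, ⟨-t + 1 / 2, by constructor <;> linarith⟩), ?_⟩
    refine (model_eq_iff.mpr ⟨⌊s⌋, hf, ?_⟩).symm
    simp only [he]; simp

/-- The universal covering of the Möbius band by the strip `|im| ≤ 1/2`, extended to all of `ℂ` by
projecting to the strip. Its deck group is generated by the glide reflection `x ↦ 1 + conj x`. -/
noncomputable def param (x : ℂ) : MobiusBand :=
  (exists_emb_eq x.re (clampHalf x.im) (abs_clampHalf _)).choose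

lemma emb_param (x : ℂ) : emb (param x) = model x.re (clampHalf x.im) :=
  (exists_emb_eq x.re (clampHalf x.im) (abs_clampHalf _)).choose_spec

lemma continuous_param : Continuous param := by
  rw [isClosedEmbedding_emb.isInducing.continuous_iff]
  have : emb ∘ param = fun x => model x.re (clampHalf x.im) := funext emb_param
  rw [this]
  unfold model clampHalf
  fun_prop

lemma param_deck (x : ℂ) : param (1 + conj x) = param x := by
  apply emb_injective
  rw [emb_param, emb_param, model_eq_iff]
  refine ⟨1, by simp [add_comm], ?_⟩
  simp [exp_pi_mul_I, clampHalf_neg]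

lemma param_eq {x y : ℂ} (hx : |x.im| ≤ 1 / 2) (hy : |y.im| ≤ 1 / 2) (h : param x = param y) :
    ∃ n : ℤ, x.re = y.re + n ∧ ((Even n ∧ x = n + y) ∨ (Odd n ∧ x = n + conj y)) := by
  have h1 := congrArg emb h
  rw [emb_param, emb_param, clampHalf_of_abs hx, clampHalf_of_abs hy] at h1
  obtain ⟨n, h1, h2⟩ := model_eq_iff.mp h1
  refine ⟨n, h1, ?_⟩
  rcases exp_pi_int n with ⟨hp, he⟩ | ⟨hp, he⟩ <;> rw [he] at h2
  · refine Or.inl ⟨hp, Complex.ext (by simp [h1, add_comm]) ?_⟩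
    have : x.im * 1 = y.im := by exact_mod_cast h2
    simpa using this
  · refine Or.inr ⟨hp, Complex.ext (by simp [h1, add_comm]) ?_⟩
    have : x.im * (-1) = y.im := by exact_mod_cast h2
    simp [← this]

/-- Maps from simply connected spaces lift through `param` to the strip. The real part of the lift
is a continuous argument of the first coordinate of `emb`; the second coordinate then determines the
imaginary part. -/
lemma exists_lift_param {E : Type*} [TopologicalSpace E] [SimplyConnectedSpace E]
    [LocallyPathConnectedSpace E] (Φ : E → MobiusBand) (hΦ : Continuous Φ) :
    ∃ F : E → ℂ, Continuous F ∧ (∀ e, |(F e).im| ≤ 1 / 2) ∧ ∀ e, param (F e) = Φ e := by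
  have hpi : (Real.pi : ℂ) ≠ 0 := by exact_mod_cast Real.pi_ne_zero
  have hsurj : ∀ m, ∃ x : ℂ, |x.im| ≤ 1 / 2 ∧ param x = m := by
    rintro ⟨⟨⟨s, hs⟩, ⟨t, ht⟩⟩⟩
    have h : |t - 1 / 2| ≤ 1 / 2 := abs_le.mpr ⟨by linarith [ht.1], by linarith [ht.2]⟩
    refine ⟨⟨s, t - 1 / 2⟩, h, emb_injective ?_⟩
    rw [emb_param, clampHalf_of_abs h]
    rfl
  have hemb := isClosedEmbedding_emb.continuous
  have hne : ∀ e, (emb (Φ e)).1 ≠ 0 := by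
    intro e
    obtain ⟨x, hx, hxe⟩ := hsurj (Φ e)
    rw [← hxe, emb_param]
    exact exp_ne_zero _
  obtain ⟨L, hL, hLe⟩ := exists_log_lift (fun e => (emb (Φ e)).1) (by fun_prop) hne
  let s : E → ℝ := fun e => (L e).im / (2 * Real.pi)
  let t : E → ℝ := fun e => ((emb (Φ e)).2 * exp (-(Real.pi * s e * I))).re
  have key : ∀ e, |t e| ≤ 1 / 2 ∧ emb (Φ e) = model (s e) (t e) := by
    intro e
    obtain ⟨x, hx, hxe⟩ := hsurj (Φ e)
    have h1 : emb (Φ e) = model x.re x.im := by rw [← hxe, emb_param, clampHalf_of_abs hx]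
    have h2 := hLe e
    rw [h1] at h2
    simp only [model] at h2
    obtain ⟨n, hn⟩ := exp_eq_exp_iff_exists_int.mp h2
    have h3 : s e = x.re + n := by
      have := congrArg Complex.im hn
      simp at this
      simp only [s, this]
      field_simp
    have h4 : (emb (Φ e)).2 * exp (-(Real.pi * s e * I)) = x.im * exp (-(Real.pi * n * I)) := by
      rw [h1, h3]
      simp only [model]
      rw [mul_assoc, ← exp_add]
      push_cast
      ring_nf
    have h5 : t e = (x.im * exp (-(Real.pi * n * I))).re := by simp only [t, h4]
    rw [h1, exp_neg] at *
    rcases exp_pi_int n with ⟨-, he⟩ | ⟨-, he⟩ <;> rw [he] at h5 <;> simp at h5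
    · rw [h5]
      exact ⟨hx, (model_eq_iff.mpr ⟨n, h3, by rw [he, mul_one]⟩).symm⟩
    · rw [h5]
      exact ⟨by rwa [abs_neg], (model_eq_iff.mpr ⟨n, h3, by rw [he]; simp⟩).symm⟩
  have hs : Continuous s := by fun_prop
  have ht : Continuous t := by fun_prop
  refine ⟨fun e => s e + t e * I, by fun_prop, fun e => by simpa using (key e).1, fun e => ?_⟩
  apply emb_injective
  rw [emb_param, (key e).2]
  simp [clampHalf_of_abs (key e).1]

/-- Two lifts to the strip differ by one deck transformation, the same at all points. -/
lemma lift_unique {E : Type*} [TopologicalSpace E] [PreconnectedSpace E] [Nonempty E]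
    (F G : E → ℂ) (hF : Continuous F) (hG : Continuous G) (hF' : ∀ e, |(F e).im| ≤ 1 / 2)
    (hG' : ∀ e, |(G e).im| ≤ 1 / 2) (h : ∀ e, param (F e) = param (G e)) :
    ∃ n : ℂ, (∀ e, F e = n + G e) ∨ (∀ e, F e = n + conj (G e)) := by
  have hpi : (Real.pi : ℂ) ≠ 0 := by exact_mod_cast Real.pi_ne_zero
  choose n hn h' using fun e => param_eq (hF' e) (hG' e) (h e)
  obtain ⟨c, hc, hc'⟩ := eq_const_of_exp_eq
    (fun e => 2 * Real.pi * I * ((F e).re - (G e).re : ℝ)) (by fun_prop) 1 (by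
      intro e
      rw [hn e, exp_eq_one_iff]
      exact ⟨n e, by push_cast; ring⟩)
  obtain ⟨a⟩ : Nonempty E := inferInstance
  have hconst : ∀ e, n e = n a := by
    intro e
    have h1 := (hc' e).trans (hc' a).symm
    have h2 := mul_left_cancel₀ (by simp [hpi]) h1
    rw [hn e, hn a] at h2
    have h3 : ((G e).re + n e - (G e).re : ℝ) = (G a).re + n a - (G a).re := by exact_mod_cast h2
    have h4 : (n e : ℝ) = n a := by linarith
    exact_mod_cast h4
  simp only [hconst] at h'
  refine ⟨n a, ?_⟩
  rcases Int.even_or_odd (n a) with hp | hp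
  · exact Or.inl fun e => ((h' e).resolve_right fun q => (Int.not_even_iff_odd.mpr q.1) hp).2
  · exact Or.inr fun e => ((h' e).resolve_left fun q => (Int.not_even_iff_odd.mpr hp) q.1).2

lemma param_inj_of_close {x y : ℂ} (h : |x.re - y.re| < 1) (hx : |x.im| ≤ 1 / 2)
    (hy : |y.im| ≤ 1 / 2) (hxy : param x = param y) : x = y := by
  obtain ⟨n, hn, h'⟩ := param_eq hx hy hxy
  have h1 : |(n : ℝ)| < 1 := by rwa [hn, add_sub_cancel_left] at h
  have h2 : n = 0 := Int.abs_lt_one_iff.mp (by exact_mod_cast h1)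
  subst h2
  simpa using h'

/-! ### The contradiction -/

/-- The Möbius band admits no cancellative continuous binary operation. -/
theorem mobiusBand_no_cancellative_continuous_mul :
    ¬ ∃ mul : MobiusBand → MobiusBand → MobiusBand,
        Continuous (fun p : MobiusBand × MobiusBand => mul p.1 p.2) ∧
        (∀ z : MobiusBand, Function.Injective (mul z)) ∧
        (∀ z : MobiusBand, Function.Injective fun x : MobiusBand => mul x z) := by
  rintro ⟨mul, hmul, hl, hr⟩
  have hP := continuous_param
  obtain ⟨F, hF, hFim, hFP⟩ := exists_lift_param
    (fun p : ℂ × ℂ => mul (param p.1) (param p.2))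
    (hmul.comp (f := fun p : ℂ × ℂ => (param p.1, param p.2)) (by fun_prop))
  obtain ⟨n, h | h⟩ := lift_unique (fun p : ℂ × ℂ => F (1 + conj p.1, p.2)) F
    (by fun_prop) hF (fun _ => hFim _) hFim (fun e => by simp only [hFP, param_deck])
  -- A lift unaffected in orientation by a loop in the left variable contradicts injectivity in
  -- that variable.
  · refine not_even_right (fun z x => F (x, z)) (by fun_prop) ?_ n fun z x => h (x, z)
    intro z x y h1 hx hy hxy
    have h2 := congrArg param hxy
    simp only [hFP] at h2
    exact param_inj_of_close h1 hx hy (hr _ h2)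
  -- An orientation reversed by a loop in the left variable contradicts injectivity in the right
  -- variable.
  · refine not_odd_left (fun z x => F (z, x)) hF ?_ n fun z x => h (z, x)
    intro z x y h1 hx hy hxy
    have h2 := congrArg param hxy
    simp only [hFP] at h2
    exact param_inj_of_close h1 hx hy (hl _ h2)
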